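/- Let M be a 6×6 real symplectic matrix whose characteristic polynomial is divisible by (X−1)². If Δ = (a−2)² − 4(b−2a+1) > 0 and some root T of q(s) = s² − (a−2)s + (b−2a+1) satisfies |T| > 2, then the characteristic polynomial of M has a real root λ with |λ| > 1; in particular M has an eigenvalue off the unit circle. -/

import Mathlib

open Polynomial

/-- The standard `6 × 6` symplectic matrix `[[0, I₃], [-I₃, 0]]`. -/
def J6 : Matrix (Fin 6) (Fin 6) ℝ :=
  Matrix.of fun i j => if (j : ℕ) = (i : ℕ) + 3 then 1 else if (i : ℕ) = (j : ℕ) + 3 then -1 else 0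

/-- The block decomposition of the index set. -/
def e36 : Fin 3 ⊕ Fin 3 ≃ Fin 6 := finSumFinEquiv (m := 3) (n := 3)

lemma e36_inl (i : Fin 3) : ((e36 (Sum.inl i) : Fin 6) : ℕ) = i := rfl

lemma e36_inr (i : Fin 3) : ((e36 (Sum.inr i) : Fin 6) : ℕ) = 3 + i := rfl

/-- `J6` is, after reindexing, the negative of the Mathlib matrix `J`. -/
lemma J6_eq : J6.submatrix e36 e36
    = - Matrix.J (Fin 3) ℝ := by
  ext i j
  rcases i with i | i <;> rcases j with j | j <;> fin_cases i <;> fin_cases j <;>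
    simp [J6, Matrix.J, e36_inl, e36_inr]

lemma symp_mem (M : Matrix (Fin 6) (Fin 6) ℝ) (hsymp : M.transpose * J6 * M = J6) :
    M.submatrix e36 e36
      ∈ Matrix.symplecticGroup (Fin 3) ℝ := by
  rw [SymplecticGroup.mem_iff']
  have h := congrArg (fun A : Matrix (Fin 6) (Fin 6) ℝ =>
    A.submatrix e36 e36) hsymp
  simp only [← Matrix.submatrix_mul_equiv _ _ _ e36 _, J6_eq] at h
  simpa [Matrix.transpose_submatrix] using h

lemma symp_det (M : Matrix (Fin 6) (Fin 6) ℝ) (hsymp : M.transpose * J6 * M = J6) :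
    M.det = 1 := by
  have := SymplecticGroup.det_eq_one (symp_mem M hsymp)
  rwa [Matrix.det_submatrix_equiv_self] at this

lemma J6_sq : J6 * J6 = -1 := by
  ext i j
  fin_cases i <;> fin_cases j <;> simp [J6, Matrix.mul_apply, Fin.sum_univ_succ]

lemma symp_palin (M : Matrix (Fin 6) (Fin 6) ℝ) (hsymp : M.transpose * J6 * M = J6) :
    M.charpoly = M.charpoly.reverse := by
  have hdet := symp_det M hsymp
  have hu : IsUnit M := by rw [Matrix.isUnit_iff_isUnit_det, hdet]; exact isUnit_one
  have h := Matrix.charpoly_inv M hu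
  have hinv : M⁻¹ = (-J6) * M.transpose * J6 := by
    apply Matrix.inv_eq_left_inv
    rw [show -J6 * M.transpose * J6 * M = -J6 * (M.transpose * J6 * M) by
      simp only [Matrix.mul_assoc], hsymp, Matrix.neg_mul, J6_sq, neg_neg]
  let U : (Matrix (Fin 6) (Fin 6) ℝ)ˣ :=
    ⟨-J6, J6, by rw [Matrix.neg_mul, J6_sq, neg_neg], by rw [Matrix.mul_neg, J6_sq, neg_neg]⟩
  have h2 := Matrix.charpoly_units_conj U M.transpose
  have h3 : (U.val * M.transpose * U.val⁻¹) = M⁻¹ := by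
    rw [hinv, ← Matrix.coe_units_inv]; rfl
  rw [h3, Matrix.charpoly_transpose, h, hdet] at h2
  rw [Matrix.reverse_charpoly, ← h2]
  simp
  ring

lemma coeff_four (M : Matrix (Fin 6) (Fin 6) ℝ) :
    M.charpoly.coeff 4 = ∑ i : Fin 6, ∑ j : Fin 6,
      if i < j then M i i * M j j - M i j * M j i else 0 := by
  have h := Matrix.charpoly_coeff_eq_sum_minors M 2 (by simp)
  simp only [Fintype.card_fin, Nat.reduceSub, even_two, Even.neg_pow, one_pow, one_mul] at h
  rw [h, ← Finset.sum_product', ← Finset.sum_filter]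
  symm
  refine Finset.sum_bij (fun p _ => {p.1, p.2}) ?_ ?_ ?_ ?_
  · rintro ⟨i, j⟩ hp
    simp at hp
    simp [Finset.mem_powersetCard, Finset.card_pair hp.ne]
  · decide
  · decide
  · rintro ⟨i, j⟩ hp
    simp at hp
    have hne := hp.ne
    let e : Fin 2 ≃ ({i, j} : Finset (Fin 6)) := Equiv.ofBijective
      (fun k => if k = 0 then ⟨i, by simp⟩ else ⟨j, by simp⟩) (by
        constructor
        · intro x y hxy
          fin_cases x <;> fin_cases y <;> simp_all
        · rintro ⟨x, hx⟩
          simp at hx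
          rcases hx with rfl | rfl
          · exact ⟨0, by simp⟩
          · exact ⟨1, by simp⟩)
    rw [← Matrix.det_submatrix_equiv_self e, Matrix.det_fin_two]
    have e0 : ((e 0 : ({i, j} : Finset (Fin 6))) : Fin 6) = i := rfl
    have e1 : ((e 1 : ({i, j} : Finset (Fin 6))) : Fin 6) = j := rfl
    simp only [Matrix.submatrix_apply, e0, e1]

lemma key_root (a b T : ℝ) (hT : T ^ 2 - (a - 2) * T + (b - 2 * a + 1) = 0) (h2 : |T| > 2) :
    ∃ x : ℝ, |x| > 1 ∧ x ^ 6 - a * x ^ 5 + b * x ^ 4 - (2 + 2 * b - 2 * a) * x ^ 3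
      + b * x ^ 2 - a * x + 1 = 0 := by
  have hpos : 0 ≤ T ^ 2 - 4 := by nlinarith [sq_abs T]
  have hs := Real.sq_sqrt hpos
  have hs0 := Real.sqrt_nonneg (T ^ 2 - 4)
  set s := Real.sqrt (T ^ 2 - 4)
  have main : ∀ x : ℝ, x ^ 2 = T * x - 1 → x ^ 6 - a * x ^ 5 + b * x ^ 4
      - (2 + 2 * b - 2 * a) * x ^ 3 + b * x ^ 2 - a * x + 1 = 0 := by
    intro x hx
    have e : x ^ 6 - a * x ^ 5 + b * x ^ 4 - (2 + 2 * b - 2 * a) * x ^ 3 + b * x ^ 2 - a * x + 1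
      = (x - 1) ^ 2 * ((x ^ 2 + 1) ^ 2 - (a - 2) * x * (x ^ 2 + 1)
        + (b - 2 * a + 1) * x ^ 2) := by ring
    rw [e, show x ^ 2 + 1 = T * x by linarith]
    linear_combination (x - 1) ^ 2 * x ^ 2 * hT
  rcases lt_abs.1 h2 with h | h
  · exact ⟨(T + s) / 2, lt_abs.2 (Or.inl (by linarith)), main _ (by linear_combination hs / 4)⟩
  · exact ⟨(T - s) / 2, lt_abs.2 (Or.inr (by linarith)), main _ (by linear_combination hs / 4)⟩

/-- If a `6 × 6` real symplectic matrix `M` has characteristic polynomial divisible by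
`(X - 1)²`, `Δ = (a-2)² - 4(b-2a+1) > 0` and some root `T` of
`q(s) = s² - (a-2)s + (b-2a+1)` satisfies `|T| > 2`, then the characteristic polynomial of
`M` has a real root `λ` with `|λ| > 1`; in particular `M` has an eigenvalue off the unit
circle. -/
theorem instability_criterion
    (M : Matrix (Fin 6) (Fin 6) ℝ)
    (hsymp : M.transpose * J6 * M = J6)
    (hdvd : (X - 1) ^ 2 ∣ M.charpoly)
    (a b : ℝ)
    (ha : a = Matrix.trace M)
    (hb : b = ∑ i : Fin 6, ∑ j : Fin 6,
      if i < j then M i i * M j j - M i j * M j i else 0)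
    (hΔ : (a - 2) ^ 2 - 4 * (b - 2 * a + 1) > 0)
    (hT : ∃ T : ℝ, T ^ 2 - (a - 2) * T + (b - 2 * a + 1) = 0 ∧ |T| > 2) :
    ∃ lam : ℝ, M.charpoly.IsRoot lam ∧ |lam| > 1 := by
  obtain ⟨T, hq, hT2⟩ := hT
  obtain ⟨x, hx1, hx⟩ := key_root a b T hq hT2
  refine ⟨x, ?_, hx1⟩
  have hdeg : M.charpoly.natDegree = 6 := by simp
  have hpal : ∀ k ≤ 6, M.charpoly.coeff k = M.charpoly.coeff (6 - k) := by
    intro k hk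
    conv_lhs => rw [symp_palin M hsymp]
    rw [coeff_reverse, hdeg, revAt_le hk]
  have c6 : M.charpoly.coeff 6 = 1 := by
    have := M.charpoly_monic.coeff_natDegree
    rwa [hdeg] at this
  have c5 : M.charpoly.coeff 5 = -a := by
    have := Matrix.trace_eq_neg_charpoly_coeff M
    simp at this
    rw [ha, this, neg_neg]
  have c4 : M.charpoly.coeff 4 = b := by rw [coeff_four, hb]
  have c0 := hpal 0 (by norm_num)
  have c1 := hpal 1 (by norm_num)
  have c2 := hpal 2 (by norm_num)
  norm_num at c0 c1 c2
  rw [c6] at c0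
  rw [c5] at c1
  rw [c4] at c2
  have hev : ∀ y : ℝ, M.charpoly.eval y = y ^ 6 - a * y ^ 5 + b * y ^ 4
      + M.charpoly.coeff 3 * y ^ 3 + b * y ^ 2 - a * y + 1 := by
    intro y
    rw [eval_eq_sum_range, hdeg]
    simp only [Finset.sum_range_succ, Finset.sum_range_zero, c0, c1, c2, c4, c5, c6]
    ring
  have h1 : M.charpoly.eval 1 = 0 := by
    obtain ⟨r, hr⟩ := hdvd
    rw [hr]
    simp
  rw [hev] at h1
  rw [IsRoot.def, hev]
  linear_combination hx + x ^ 3 * h1
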